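/- Fix real numbers u, v, w, r, t with u+v > 0, w > 0, r > 0, −2w < t < 2r and v + t/2 < 0. With q = q_N = exp(−2/√N), the limit as N → ∞ of N^{u+v} · (q^{−2v−t};q)_∞ (−q^{w+u};q)_∞ (q^{w+r};q)_∞ (−q^{r+u−t};q)_∞ / [ (−q^{w−v};q)_∞ (q^{u−v−t};q)_∞ (−q^{r−v−t};q)_∞ (q^{u+v+w+r};q)_∞ ] exists and equals Γ(u+v+w+r) Γ(u−v−t) / ( Γ(−2v−t) Γ(w+r) ). -/

import Mathlib

open Filter

/-- Infinite q-Pochhammer symbol `(a;q)_∞ = ∏_{k=0}^∞ (1 - a q^k)` for complex `a, q`. -/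
noncomputable def qPochInf (a q : ℂ) : ℂ := ∏' k : ℕ, (1 - a * q ^ k)

/-- Weak asymmetry scaling `q_N = exp(-2/√N)`. -/
noncomputable def qN (N : ℕ) : ℝ := Real.exp (-2 / Real.sqrt N)

/-- Real powers of `q_N`: `q_N^x = exp(-2x/√N)`, as a complex number. -/
noncomputable def qpow (N : ℕ) (x : ℝ) : ℂ := Complex.ofReal (Real.exp (-2 * x / Real.sqrt N))

/-!
Up to the factor `(N (1 - q)²)^(u+v) → 4^(u+v)`, the displayed quantity is a product of two
quotients of values of the `q`-Gamma function and of two quotients `(-q^a;q)_∞ / (-q^b;q)_∞`.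

The `q`-Gamma function `Γ_q` is log-convex on `(0, ∞)` and satisfies
`Γ_q(x+1) = (1 - q^x)/(1 - q) · Γ_q(x)`; as `q → 1⁻` the multiplier tends to `x`, and the argument
of Bohr and Mollerup survives the perturbation, so that `Γ_q(x) → Γ(x)`. The identity
`(a;q)_∞ (-a;q)_∞ = (a²;q²)_∞` then expresses `(-q^x;q)_∞` through `Γ_q(x) / Γ_{q²}(x) → 1`, which
makes each of the other two quotients tend to `2^(b-a)`.
-/

open Set Topology

section Convexity

lemma concaveOn_log_comp {E : Type*} [AddCommMonoid E] [Module ℝ E] {s : Set E} {f : E → ℝ}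
    (hf : ConcaveOn ℝ s f) (hpos : ∀ x ∈ s, 0 < f x) : ConcaveOn ℝ s fun x ↦ Real.log (f x) := by
  refine ⟨hf.1, fun x hx y hy α β hα hβ hαβ ↦ ?_⟩
  have hmix : 0 < α • f x + β • f y := convex_Ioi (0 : ℝ) (hpos x hx) (hpos y hy) hα hβ hαβ
  exact (strictConcaveOn_log_Ioi.concaveOn.2 (hpos x hx) (hpos y hy) hα hβ hαβ).trans
    (Real.log_le_log hmix (hf.2 hx hy hα hβ hαβ))

lemma convexOn_tsum {ι E : Type*} [AddCommMonoid E] [Module ℝ E] {s : Set E} {φ : ι → E → ℝ}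
    (hs : Convex ℝ s) (hφ : ∀ k, ConvexOn ℝ s (φ k))
    (hsum : ∀ x ∈ s, Summable fun k ↦ φ k x) : ConvexOn ℝ s fun x ↦ ∑' k, φ k x := by
  refine ⟨hs, fun x hx y hy α β hα hβ hαβ ↦ ?_⟩
  have hx_sum := (hsum x hx).mul_left α
  have hy_sum := (hsum y hy).mul_left β
  calc ∑' k, φ k (α • x + β • y)
      ≤ ∑' k, (α * φ k x + β * φ k y) :=
        (hsum _ (hs hx hy hα hβ hαβ)).tsum_le_tsum (fun k ↦ (hφ k).2 hx hy hα hβ hαβ)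
          (hx_sum.add hy_sum)
    _ = α • ∑' k, φ k x + β • ∑' k, φ k y := by
        rw [hx_sum.tsum_add hy_sum, tsum_mul_left, tsum_mul_left, smul_eq_mul, smul_eq_mul]

lemma convexOn_sub_mem_Icc_unit_slopes {c x y : ℝ} {F : ℝ → ℝ} (hF : ConvexOn ℝ (Ioi c) F)
    (hx : c < x) (hxy : x < y) :
    F (y + 1) - F (x + 1) ∈
      Icc ((y - x) * (F (x + 1) - F x)) ((y - x) * (F (y + 1 + 1) - F (y + 1))) := by
  have hpos : 0 < y - x := sub_pos.2 hxy
  have hleft := hF.slope_mono_adjacent (mem_Ioi.2 hx) (mem_Ioi.2 (by linarith : c < y + 1))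
    (lt_add_one x) (by linarith)
  have hright := hF.slope_mono_adjacent (mem_Ioi.2 (by linarith : c < x + 1))
    (mem_Ioi.2 (by linarith : c < y + 1 + 1)) (by linarith) (lt_add_one (y + 1))
  rw [add_sub_cancel_left, div_one, add_sub_add_right_eq_sub, le_div_iff₀' hpos] at hleft
  rw [add_sub_cancel_left, div_one, add_sub_add_right_eq_sub, div_le_iff₀' hpos] at hright
  exact ⟨hleft, hright⟩

variable {ι : Type*} {l : Filter ι} {F : ι → ℝ → ℝ} {G : ℝ → ℝ} {c : ℝ}

lemma tendsto_sub_add_natCast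
    (hstep : ∀ x, c < x → Tendsto (fun i ↦ F i (x + 1) - F i x) l (𝓝 (G (x + 1) - G x)))
    {x : ℝ} (hx : c < x) (n : ℕ) :
    Tendsto (fun i ↦ F i (x + n) - F i x) l (𝓝 (G (x + n) - G x)) := by
  induction n with
  | zero => simpa using tendsto_const_nhds
  | succ n ih =>
    have hxn : c < x + n := hx.trans_le (le_add_of_nonneg_right n.cast_nonneg)
    convert (hstep _ hxn).add ih using 2 <;> push_cast <;> ring_nf

/-- A perturbed Bohr–Mollerup theorem: far out, the convexity bounds for `F i` and `G` nearly agree,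
and finitely many unit steps carry the comparison back to `a` and `b`. -/
theorem tendsto_sub_of_convexOn_of_tendsto_unit_step
    (hF : ∀ᶠ i in l, ConvexOn ℝ (Ioi c) (F i)) (hG : ConvexOn ℝ (Ioi c) G)
    (hstep : ∀ x, c < x → Tendsto (fun i ↦ F i (x + 1) - F i x) l (𝓝 (G (x + 1) - G x)))
    (hslow : ∀ s, Tendsto (fun x ↦ (G (x + s + 1) - G (x + s)) - (G (x + 1) - G x)) atTop (𝓝 0))
    {a b : ℝ} (ha : c < a) (hab : a < b) :
    Tendsto (fun i ↦ F i b - F i a) l (𝓝 (G b - G a)) := by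
  rw [Metric.tendsto_nhds]
  intro ε hε
  have hgap : Tendsto (fun n : ℕ ↦ (b - a) * ((G (b + n + 1 + 1) - G (b + n + 1)) -
      (G (a + n + 1) - G (a + n)))) atTop (𝓝 0) := by
    have htop : Tendsto (fun n : ℕ ↦ a + (n : ℝ)) atTop atTop :=
      tendsto_atTop_add_const_left _ _ tendsto_natCast_atTop_atTop
    rw [← mul_zero (b - a)]
    convert ((hslow (b - a + 1)).comp htop).const_mul (b - a) using 3 with n
    simp only [Function.comp_apply]
    ring_nf
  obtain ⟨n, hn⟩ := (hgap.eventually_lt_const (half_pos hε)).exists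
  have han : c < a + n := ha.trans_le (le_add_of_nonneg_right n.cast_nonneg)
  have hshift := (tendsto_sub_add_natCast hstep (ha.trans hab) (n + 1)).sub
    (tendsto_sub_add_natCast hstep ha (n + 1))
  simp only [Nat.cast_add, Nat.cast_one, ← add_assoc] at hshift
  have hlower := ((hstep (a + n) han).const_mul (b - a)).sub hshift
  have hupper := ((hstep (b + n + 1) (by linarith)).const_mul (b - a)).sub hshift
  filter_upwards [hF, hlower.eventually_const_lt (sub_lt_self _ (half_pos hε)),
    hupper.eventually_lt_const (lt_add_of_pos_right _ (half_pos hε))] with i hFi hlow hupp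
  have boundF := convexOn_sub_mem_Icc_unit_slopes hFi han (add_lt_add_left hab (n : ℝ))
  have boundG := convexOn_sub_mem_Icc_unit_slopes hG han (add_lt_add_left hab (n : ℝ))
  rw [add_sub_add_right_eq_sub] at boundF boundG
  rw [Real.dist_eq, abs_lt]
  constructor <;> linarith [boundF.1, boundF.2, boundG.1, boundG.2]

end Convexity

/-- The infinite `q`-Pochhammer symbol `(a;q)_∞` of real arguments, as a real number; logarithms and
convexity live here, and `qPochInf_ofReal` transfers the results to `qPochInf`. -/
noncomputable def realQPochInf (a q : ℝ) : ℝ := ∏' k : ℕ, (1 - a * q ^ k)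

lemma qPochInf_ofReal (a q : ℝ) : qPochInf a q = realQPochInf a q := by
  have h := Complex.isometry_ofReal.isClosedEmbedding.map_tprod
    (g := Complex.ofRealHom) (L := .unconditional ℕ) (fun k : ℕ ↦ 1 - a * q ^ k)
  simpa [qPochInf, realQPochInf] using h.symm

section QPochhammer

variable {a q : ℝ}

lemma summable_neg_mul_pow (a : ℝ) (hq : |q| < 1) : Summable fun k : ℕ ↦ -(a * q ^ k) :=
  ((summable_geometric_of_abs_lt_one hq).mul_left a).neg

lemma multipliable_one_sub_mul_pow (a : ℝ) (hq : |q| < 1) :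
    Multipliable fun k : ℕ ↦ 1 - a * q ^ k := by
  simpa only [sub_eq_add_neg] using
    Real.multipliable_one_add_of_summable (summable_neg_mul_pow a hq)

lemma summable_log_one_sub_mul_pow (a : ℝ) (hq : |q| < 1) :
    Summable fun k : ℕ ↦ Real.log (1 - a * q ^ k) := by
  simpa only [sub_eq_add_neg] using
    Real.summable_log_one_add_of_summable (summable_neg_mul_pow a hq)

lemma realQPochInf_eq_one_sub_mul (a : ℝ) (hq : |q| < 1) :
    realQPochInf a q = (1 - a) * realQPochInf (a * q) q := by
  have hshift (k : ℕ) : 1 - a * q ^ (k + 1) = 1 - a * q * q ^ k := by ring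
  have h := tprod_eq_zero_mul' (f := fun k : ℕ ↦ 1 - a * q ^ k)
    (by simpa only [hshift] using multipliable_one_sub_mul_pow (a * q) hq)
  simpa only [realQPochInf, hshift, pow_zero, mul_one] using h

lemma realQPochInf_mul_neg (a : ℝ) (hq : |q| < 1) :
    realQPochInf a q * realQPochInf (-a) q = realQPochInf (a ^ 2) (q ^ 2) := by
  rw [realQPochInf, realQPochInf,
    ← (multipliable_one_sub_mul_pow a hq).tprod_mul (multipliable_one_sub_mul_pow (-a) hq)]
  exact tprod_congr fun k ↦ by ring

lemma one_sub_mul_pow_pos (ha : a < 1) (hq₀ : 0 ≤ q) (hq₁ : q < 1) (k : ℕ) :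
    0 < 1 - a * q ^ k := by
  have hpow₀ : 0 ≤ q ^ k := pow_nonneg hq₀ k
  have hpow₁ : q ^ k ≤ 1 := pow_le_one₀ hq₀ hq₁.le
  nlinarith [mul_nonneg hpow₀ (sub_nonneg.2 ha.le), mul_pos (sub_pos.2 ha) (sub_pos.2 hq₁)]

lemma realQPochInf_eq_exp_tsum_log (ha : a < 1) (hq₀ : 0 ≤ q) (hq₁ : q < 1) :
    realQPochInf a q = Real.exp (∑' k : ℕ, Real.log (1 - a * q ^ k)) :=
  (Real.rexp_tsum_eq_tprod (one_sub_mul_pow_pos ha hq₀ hq₁)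
    (summable_log_one_sub_mul_pow a (abs_lt.2 ⟨by linarith, hq₁⟩))).symm

lemma realQPochInf_pos (ha : a < 1) (hq₀ : 0 ≤ q) (hq₁ : q < 1) : 0 < realQPochInf a q := by
  rw [realQPochInf_eq_exp_tsum_log ha hq₀ hq₁]
  exact Real.exp_pos _

lemma realQPochInf_rpow (x : ℝ) (hq₀ : 0 < q) (hq₁ : q < 1) :
    realQPochInf (q ^ x) q = (1 - q ^ x) * realQPochInf (q ^ (x + 1)) q := by
  rw [realQPochInf_eq_one_sub_mul _ (abs_lt.2 ⟨by linarith, hq₁⟩), Real.rpow_add_one hq₀.ne']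

lemma realQPochInf_neg_rpow (x : ℝ) (hq₀ : 0 < q) (hq₁ : q < 1) :
    realQPochInf (-q ^ x) q = (1 + q ^ x) * realQPochInf (-q ^ (x + 1)) q := by
  rw [realQPochInf_eq_one_sub_mul _ (abs_lt.2 ⟨by linarith, hq₁⟩), sub_neg_eq_add, neg_mul,
    Real.rpow_add_one hq₀.ne']

lemma convexOn_neg_log_realQPochInf_rpow (hq₀ : 0 < q) (hq₁ : q < 1) :
    ConvexOn ℝ (Ioi 0) fun x : ℝ ↦ -Real.log (realQPochInf (q ^ x) q) := by
  have hterm (k : ℕ) : ConvexOn ℝ (Ioi 0) fun x : ℝ ↦ -Real.log (1 - q ^ x * q ^ k) := by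
    have hpow : ConvexOn ℝ (Ioi 0) fun x : ℝ ↦ q ^ x * q ^ k := by
      simpa only [smul_eq_mul, mul_comm] using
        ((convexOn_rpow_left hq₀).subset (subset_univ _) (convex_Ioi 0)).smul (pow_nonneg hq₀.le k)
    exact (concaveOn_log_comp ((concaveOn_const 1 (convex_Ioi 0)).sub hpow) fun x hx ↦
      one_sub_mul_pow_pos (Real.rpow_lt_one hq₀.le hq₁ hx) hq₀.le hq₁ k).neg
  have hsum (x : ℝ) (_ : x ∈ Ioi 0) : Summable fun k : ℕ ↦ -Real.log (1 - q ^ x * q ^ k) :=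
    (summable_log_one_sub_mul_pow (q ^ x) (abs_lt.2 ⟨by linarith, hq₁⟩)).neg
  refine (convexOn_tsum (convex_Ioi 0) hterm hsum).congr fun x hx ↦ ?_
  rw [realQPochInf_eq_exp_tsum_log (Real.rpow_lt_one hq₀.le hq₁ hx) hq₀.le hq₁, Real.log_exp]
  exact tsum_neg

end QPochhammer

/-- The `q`-Gamma function `Γ_q(x) = (q;q)_∞ / (q^x;q)_∞ · (1 - q)^(1-x)`, for `0 < q < 1`. At its
poles `x = 0, -1, -2, …` division by zero gives the value `0`. -/
noncomputable def qGamma (q x : ℝ) : ℝ :=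
  realQPochInf q q / realQPochInf (q ^ x) q * (1 - q) ^ (1 - x)

section QGamma

variable {q x : ℝ}

lemma qGamma_pos (hq₀ : 0 < q) (hq₁ : q < 1) (hx : 0 < x) : 0 < qGamma q x :=
  mul_pos (div_pos (realQPochInf_pos hq₁ hq₀.le hq₁)
    (realQPochInf_pos (Real.rpow_lt_one hq₀.le hq₁ hx) hq₀.le hq₁))
    (Real.rpow_pos_of_pos (sub_pos.2 hq₁) _)

lemma qGamma_one (hq₀ : 0 < q) (hq₁ : q < 1) : qGamma q 1 = 1 := by
  simp [qGamma, (realQPochInf_pos hq₁ hq₀.le hq₁).ne']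

lemma qGamma_add_one (hq₀ : 0 < q) (hq₁ : q < 1) (hx : x ≠ 0) :
    qGamma q (x + 1) = (1 - q ^ x) / (1 - q) * qGamma q x := by
  have hbracket : 1 - q ^ x ≠ 0 := fun h ↦ hx <| by
    rw [← Real.rpow_right_inj hq₀ hq₁.ne, Real.rpow_zero, sub_eq_zero.1 h]
  have hone_sub : 0 < 1 - q := sub_pos.2 hq₁
  rw [qGamma, qGamma, realQPochInf_rpow x hq₀ hq₁,
    show 1 - x = 1 - (x + 1) + 1 by ring, Real.rpow_add_one hone_sub.ne', mul_comm (1 - q ^ x),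
    ← div_div]
  field_simp

lemma convexOn_log_qGamma (hq₀ : 0 < q) (hq₁ : q < 1) :
    ConvexOn ℝ (Ioi 0) fun x ↦ Real.log (qGamma q x) := by
  have haffine : ConvexOn ℝ (Ioi 0) fun x : ℝ ↦
      Real.log (realQPochInf q q) + (1 - x) * Real.log (1 - q) :=
    ⟨convex_Ioi 0, fun x _ y _ α β _ _ hαβ ↦ le_of_eq (by
      obtain rfl : β = 1 - α := by linarith
      simp only [smul_eq_mul]
      ring)⟩
  refine ((convexOn_neg_log_realQPochInf_rpow hq₀ hq₁).add haffine).congr fun x hx ↦ ?_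
  have hnum := realQPochInf_pos hq₁ hq₀.le hq₁
  have hden := realQPochInf_pos (Real.rpow_lt_one hq₀.le hq₁ hx) hq₀.le hq₁
  have hone_sub : 0 < 1 - q := sub_pos.2 hq₁
  rw [qGamma, Real.log_mul (by positivity) (by positivity), Real.log_div hnum.ne' hden.ne',
    Real.log_rpow hone_sub]
  simp only [Pi.add_apply]
  ring

lemma qGamma_div_qGamma (a b : ℝ) (hq₀ : 0 < q) (hq₁ : q < 1) :
    qGamma q b / qGamma q a =
      realQPochInf (q ^ a) q / realQPochInf (q ^ b) q * (1 - q) ^ (a - b) := by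
  have hnum := (realQPochInf_pos hq₁ hq₀.le hq₁).ne'
  have hone_sub : 0 < 1 - q := sub_pos.2 hq₁
  rw [show a - b = (1 - b) - (1 - a) by ring, Real.rpow_sub hone_sub, qGamma, qGamma]
  field_simp

end QGamma

section LimitsAtOne

lemma forall_real_of_gt_of_add_one {p : ℝ → Prop} (c : ℝ) (hbase : ∀ x, c < x → p x)
    (hstep : ∀ x, p (x + 1) → p x) (x : ℝ) : p x := by
  obtain ⟨n, hn⟩ := exists_nat_gt (c - x)
  have hdescend (n : ℕ) : ∀ y, p (y + n) → p y := by
    induction n with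
    | zero => simp
    | succ n ih =>
      intro y hy
      refine ih y (hstep _ ?_)
      rwa [add_assoc, ← Nat.cast_add_one]
  exact hdescend n x (hbase _ (by linarith))

lemma ne_neg_natCast_of_pos {x : ℝ} (hx : 0 < x) (m : ℕ) : x ≠ -m :=
  ((neg_nonpos.2 m.cast_nonneg).trans_lt hx).ne'

lemma eventually_nhdsLT_one_pos_lt_one : ∀ᶠ q : ℝ in 𝓝[<] 1, 0 < q ∧ q < 1 :=
  Ioo_mem_nhdsLT one_pos

lemma tendsto_rpow_nhdsLT_one (x : ℝ) : Tendsto (fun q : ℝ ↦ q ^ x) (𝓝[<] 1) (𝓝 1) := by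
  have h := (Real.continuousAt_rpow_const 1 x (.inl one_ne_zero)).tendsto
  rw [Real.one_rpow] at h
  exact h.mono_left nhdsWithin_le_nhds

lemma tendsto_one_sub_rpow_div_one_sub (x : ℝ) :
    Tendsto (fun q : ℝ ↦ (1 - q ^ x) / (1 - q)) (𝓝[<] 1) (𝓝 x) := by
  have hderiv := Real.hasDerivAt_rpow_const (x := 1) (p := x) (.inl one_ne_zero)
  rw [Real.one_rpow, mul_one, hasDerivAt_iff_tendsto_slope] at hderiv
  refine (hderiv.mono_left (nhdsWithin_mono _ fun q hq ↦ ne_of_lt hq)).congr fun q ↦ ?_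
  rw [slope_def_field, Real.one_rpow, ← neg_div_neg_eq, neg_sub, neg_sub]

lemma tendsto_qGamma_of_one_lt {x : ℝ} (hx : 1 < x) :
    Tendsto (fun q ↦ qGamma q x) (𝓝[<] 1) (𝓝 (Real.Gamma x)) := by
  have hlogGamma (y : ℝ) (hy : 0 < y) :
      Real.log (Real.Gamma (y + 1)) - Real.log (Real.Gamma y) = Real.log y := by
    rw [Real.Gamma_add_one hy.ne', Real.log_mul hy.ne' (Real.Gamma_pos_of_pos hy).ne',
      add_sub_cancel_right]
  have hlim : Tendsto (fun q ↦ Real.log (qGamma q x) - Real.log (qGamma q 1)) (𝓝[<] 1)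
      (𝓝 (Real.log (Real.Gamma x) - Real.log (Real.Gamma 1))) := by
    refine tendsto_sub_of_convexOn_of_tendsto_unit_step (c := 0)
      (F := fun q y ↦ Real.log (qGamma q y)) (G := fun y ↦ Real.log (Real.Gamma y)) ?_
      Real.convexOn_log_Gamma (fun y hy ↦ ?_) (fun s ↦ ?_) one_pos hx
    · filter_upwards [eventually_nhdsLT_one_pos_lt_one] with q hq
      exact convexOn_log_qGamma hq.1 hq.2
    · rw [hlogGamma y hy]
      refine ((tendsto_one_sub_rpow_div_one_sub y).log hy.ne').congr' ?_
      filter_upwards [eventually_nhdsLT_one_pos_lt_one] with q hq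
      have hbracket : 0 < 1 - q ^ y := sub_pos.2 (Real.rpow_lt_one hq.1.le hq.2 hy)
      rw [qGamma_add_one hq.1 hq.2 hy.ne', Real.log_mul
        (div_pos hbracket (sub_pos.2 hq.2)).ne' (qGamma_pos hq.1 hq.2 hy).ne', add_sub_cancel_right]
    · refine (Real.tendsto_log_comp_add_sub_log s).congr' ?_
      filter_upwards [eventually_gt_atTop 0, eventually_gt_atTop (-s)] with y hy hys
      rw [hlogGamma y hy, hlogGamma (y + s) (by linarith)]
  have hexp := hlim.rexp
  rw [Real.Gamma_one, Real.log_one, sub_zero, Real.exp_log (Real.Gamma_pos_of_pos (by linarith))]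
    at hexp
  refine hexp.congr' ?_
  filter_upwards [eventually_nhdsLT_one_pos_lt_one] with q hq
  rw [qGamma_one hq.1 hq.2, Real.log_one, sub_zero,
    Real.exp_log (qGamma_pos hq.1 hq.2 (by linarith))]

theorem tendsto_qGamma {x : ℝ} (hx : ∀ m : ℕ, x ≠ -m) :
    Tendsto (fun q ↦ qGamma q x) (𝓝[<] 1) (𝓝 (Real.Gamma x)) := by
  induction x using forall_real_of_gt_of_add_one 1 with
  | hbase x hx₁ => exact tendsto_qGamma_of_one_lt hx₁
  | hstep x ih =>
    have hx₀ : x ≠ 0 := by simpa using hx 0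
    have hx₁ (m : ℕ) : x + 1 ≠ -m := fun h ↦ hx (m + 1) (by push_cast; linarith)
    have hquot := (ih hx₁).div (tendsto_one_sub_rpow_div_one_sub x) hx₀
    rw [Real.Gamma_add_one hx₀, mul_div_cancel_left₀ _ hx₀] at hquot
    refine hquot.congr' ?_
    filter_upwards [eventually_nhdsLT_one_pos_lt_one,
      (tendsto_one_sub_rpow_div_one_sub x).eventually_ne hx₀] with q hq hbracket
    simp only [Pi.div_apply, qGamma_add_one hq.1 hq.2 hx₀]
    exact mul_div_cancel_left₀ _ hbracket

theorem tendsto_realQPochInf_rpow_div {a b : ℝ} (ha : ∀ m : ℕ, a ≠ -m) (hb : ∀ m : ℕ, b ≠ -m) :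
    Tendsto (fun q : ℝ ↦ realQPochInf (q ^ a) q / realQPochInf (q ^ b) q * (1 - q) ^ (a - b))
      (𝓝[<] 1) (𝓝 (Real.Gamma b / Real.Gamma a)) := by
  refine ((tendsto_qGamma hb).div (tendsto_qGamma ha) (Real.Gamma_ne_zero ha)).congr' ?_
  filter_upwards [eventually_nhdsLT_one_pos_lt_one] with q hq
  exact qGamma_div_qGamma a b hq.1 hq.2

lemma realQPochInf_neg_rpow_div_eq_qGamma_div {q x : ℝ} (hq₀ : 0 < q) (hq₁ : q < 1) (hx : 0 < x) :
    realQPochInf (-q ^ x) q / realQPochInf (-q) q =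
      (1 + q) ^ (1 - x) * (qGamma q x / qGamma (q ^ 2) x) := by
  have hpow_lt : q ^ x < 1 := Real.rpow_lt_one hq₀.le hq₁ hx
  have hpow_sq : (q ^ 2) ^ x = (q ^ x) ^ 2 := (Real.rpow_pow_comm hq₀.le x 2).symm
  have habs : |q| < 1 := abs_lt.2 ⟨by linarith, hq₁⟩
  have hq := (realQPochInf_pos hq₁ hq₀.le hq₁).ne'
  have hqx := (realQPochInf_pos hpow_lt hq₀.le hq₁).ne'
  have hneg := (realQPochInf_pos (by linarith : -q < 1) hq₀.le hq₁).ne'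
  have hnegx := (realQPochInf_pos (by linarith [Real.rpow_pos_of_pos hq₀ x] : -q ^ x < 1)
    hq₀.le hq₁).ne'
  have hone_sub : (1 - q) ^ (1 - x) ≠ 0 := (Real.rpow_pos_of_pos (sub_pos.2 hq₁) _).ne'
  have hone_add : (1 + q) ^ (1 - x) ≠ 0 := (Real.rpow_pos_of_pos (by linarith) _).ne'
  rw [qGamma, qGamma, hpow_sq, ← realQPochInf_mul_neg q habs, ← realQPochInf_mul_neg (q ^ x) habs,
    show 1 - q ^ 2 = (1 - q) * (1 + q) by ring,
    Real.mul_rpow (by linarith) (by linarith)]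
  field_simp

lemma tendsto_realQPochInf_neg_rpow_div_neg (x : ℝ) :
    Tendsto (fun q : ℝ ↦ realQPochInf (-q ^ x) q / realQPochInf (-q) q) (𝓝[<] 1)
      (𝓝 (2 ^ (1 - x))) := by
  induction x using forall_real_of_gt_of_add_one 0 with
  | hbase x hx =>
    have hGamma := tendsto_qGamma (ne_neg_natCast_of_pos hx)
    have hsq : Tendsto (fun q : ℝ ↦ q ^ 2) (𝓝[<] 1) (𝓝[<] 1) := by
      refine tendsto_nhdsWithin_iff.2 ⟨by simpa using tendsto_rpow_nhdsLT_one 2, ?_⟩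
      filter_upwards [eventually_nhdsLT_one_pos_lt_one] with q hq
      exact pow_lt_one₀ hq.1.le hq.2 two_ne_zero
    have hratio := hGamma.div (hGamma.comp hsq) (Real.Gamma_pos_of_pos hx).ne'
    have hfactor : Tendsto (fun q : ℝ ↦ (1 + q) ^ (1 - x)) (𝓝[<] 1) (𝓝 (2 ^ (1 - x))) := by
      have hbase : Tendsto (fun q : ℝ ↦ 1 + q) (𝓝[<] 1) (𝓝 2) := by
        simpa [one_add_one_eq_two] using (tendsto_rpow_nhdsLT_one 1).const_add 1
      exact hbase.rpow_const (.inl two_ne_zero)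
    rw [div_self (Real.Gamma_pos_of_pos hx).ne'] at hratio
    rw [← mul_one (2 ^ (1 - x))]
    refine (hfactor.mul hratio).congr' ?_
    filter_upwards [eventually_nhdsLT_one_pos_lt_one] with q hq
    exact (realQPochInf_neg_rpow_div_eq_qGamma_div hq.1 hq.2 hx).symm
  | hstep x ih =>
    have hlim := ((tendsto_rpow_nhdsLT_one x).const_add 1).mul ih
    rw [one_add_one_eq_two, mul_comm, ← Real.rpow_add_one two_ne_zero,
      show 1 - (x + 1) + 1 = 1 - x by ring] at hlim
    refine hlim.congr' ?_
    filter_upwards [eventually_nhdsLT_one_pos_lt_one] with q hq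
    rw [realQPochInf_neg_rpow x hq.1 hq.2, mul_div_assoc]

theorem tendsto_realQPochInf_neg_rpow_div (a b : ℝ) :
    Tendsto (fun q : ℝ ↦ realQPochInf (-q ^ a) q / realQPochInf (-q ^ b) q) (𝓝[<] 1)
      (𝓝 (2 ^ (b - a))) := by
  have hlim := (tendsto_realQPochInf_neg_rpow_div_neg a).div
    (tendsto_realQPochInf_neg_rpow_div_neg b) (Real.rpow_pos_of_pos two_pos _).ne'
  rw [← Real.rpow_sub two_pos, sub_sub_sub_cancel_left] at hlim
  refine hlim.congr' ?_
  filter_upwards [eventually_nhdsLT_one_pos_lt_one] with q hq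
  have hneg := realQPochInf_pos (by linarith : -q < 1) hq.1.le hq.2
  exact div_div_div_cancel_right₀ hneg.ne' _ _

end LimitsAtOne

section WeakAsymmetry

lemma qpow_eq_rpow (N : ℕ) (x : ℝ) : qpow N x = ((qN N ^ x : ℝ) : ℂ) := by
  rw [qpow, qN, ← Real.exp_mul, div_mul_eq_mul_div]

lemma qPochInf_qpow (N : ℕ) (x : ℝ) :
    qPochInf (qpow N x) (qN N) = realQPochInf (qN N ^ x) (qN N) := by
  rw [qpow_eq_rpow, qPochInf_ofReal]

lemma qPochInf_neg_qpow (N : ℕ) (x : ℝ) :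
    qPochInf (-qpow N x) (qN N) = realQPochInf (-qN N ^ x) (qN N) := by
  rw [qpow_eq_rpow, ← Complex.ofReal_neg, qPochInf_ofReal]

lemma tendsto_neg_two_div_sqrt_natCast :
    Tendsto (fun N : ℕ ↦ -2 / √(N : ℝ)) atTop (𝓝[<] 0) := by
  refine tendsto_nhdsWithin_iff.2
    ⟨(Real.tendsto_sqrt_atTop.comp tendsto_natCast_atTop_atTop).const_div_atTop (-2), ?_⟩
  filter_upwards [eventually_gt_atTop 0] with N hN
  exact div_neg_of_neg_of_pos (by norm_num) (Real.sqrt_pos.2 (Nat.cast_pos.2 hN))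

lemma tendsto_qN : Tendsto qN atTop (𝓝[<] 1) := by
  have hneg := tendsto_nhdsWithin_iff.1 tendsto_neg_two_div_sqrt_natCast
  refine tendsto_nhdsWithin_iff.2 ⟨Real.exp_zero ▸ hneg.1.rexp, ?_⟩
  filter_upwards [hneg.2] with N hN
  exact Real.exp_lt_one_iff.2 hN

lemma tendsto_sqrt_mul_one_sub_qN :
    Tendsto (fun N : ℕ ↦ √(N : ℝ) * (1 - qN N)) atTop (𝓝 2) := by
  have hslope := (Real.hasDerivAt_exp 0).tendsto_slope_zero_left.comp
    tendsto_neg_two_div_sqrt_natCast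
  rw [Real.exp_zero] at hslope
  have hlim := hslope.const_mul 2
  rw [mul_one] at hlim
  refine hlim.congr fun N ↦ ?_
  simp only [Function.comp_apply, zero_add, smul_eq_mul, qN, inv_div]
  ring

lemma tendsto_rpow_mul_one_sub_qN_rpow (s : ℝ) :
    Tendsto (fun N : ℕ ↦ (N : ℝ) ^ s * (1 - qN N) ^ (2 * s)) atTop (𝓝 (2 ^ (2 * s))) := by
  refine (tendsto_sqrt_mul_one_sub_qN.rpow_const (p := 2 * s) (.inl two_ne_zero)).congr' ?_
  filter_upwards [tendsto_qN self_mem_nhdsWithin] with N hN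
  rw [Real.mul_rpow (Real.sqrt_nonneg _) (sub_nonneg.2 (le_of_lt hN)), Real.rpow_mul
    (Real.sqrt_nonneg _), Real.rpow_two, Real.sq_sqrt N.cast_nonneg]

theorem tendsto_realQPochInf_qN (u v w r t : ℝ) (h₁ : ∀ m : ℕ, -2 * v - t ≠ -m)
    (h₂ : ∀ m : ℕ, w + r ≠ -m) (h₃ : ∀ m : ℕ, u - v - t ≠ -m)
    (h₄ : ∀ m : ℕ, u + v + w + r ≠ -m) :
    Tendsto (fun N : ℕ ↦ (N : ℝ) ^ (u + v) *
      (realQPochInf (qN N ^ (-2 * v - t)) (qN N) * realQPochInf (-qN N ^ (w + u)) (qN N) *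
       realQPochInf (qN N ^ (w + r)) (qN N) * realQPochInf (-qN N ^ (r + u - t)) (qN N)) /
      (realQPochInf (-qN N ^ (w - v)) (qN N) * realQPochInf (qN N ^ (u - v - t)) (qN N) *
       realQPochInf (-qN N ^ (r - v - t)) (qN N) * realQPochInf (qN N ^ (u + v + w + r)) (qN N)))
      atTop (𝓝 (Real.Gamma (u + v + w + r) * Real.Gamma (u - v - t) /
        (Real.Gamma (-2 * v - t) * Real.Gamma (w + r)))) := by
  have hGamma := (tendsto_realQPochInf_rpow_div h₁ h₃).mul (tendsto_realQPochInf_rpow_div h₂ h₄)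
  have hneg := (tendsto_realQPochInf_neg_rpow_div (w + u) (w - v)).mul
    (tendsto_realQPochInf_neg_rpow_div (r + u - t) (r - v - t))
  have hlim := ((hGamma.mul hneg).comp tendsto_qN).mul (tendsto_rpow_mul_one_sub_qN_rpow (u + v))
  have hpow_two : (2 : ℝ) ^ (w - v - (w + u)) * 2 ^ (r - v - t - (r + u - t)) *
      2 ^ (2 * (u + v)) = 1 := by
    rw [← Real.rpow_add two_pos, ← Real.rpow_add two_pos,
      show w - v - (w + u) + (r - v - t - (r + u - t)) + 2 * (u + v) = 0 by ring, Real.rpow_zero]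
  rw [mul_assoc, hpow_two, mul_one, div_mul_div_comm, mul_comm (Real.Gamma (u - v - t))] at hlim
  refine hlim.congr' ?_
  filter_upwards [tendsto_qN self_mem_nhdsWithin] with N hN
  have hone_sub : 0 < 1 - qN N := sub_pos.2 hN
  have hpow_one_sub : (1 - qN N) ^ (-2 * v - t - (u - v - t)) *
      (1 - qN N) ^ (w + r - (u + v + w + r)) * (1 - qN N) ^ (2 * (u + v)) = 1 := by
    rw [← Real.rpow_add hone_sub, ← Real.rpow_add hone_sub,
      show -2 * v - t - (u - v - t) + (w + r - (u + v + w + r)) + 2 * (u + v) = 0 by ring,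
      Real.rpow_zero]
  simp only [Function.comp_apply]
  refine .trans ?_ ((congrArg (_ * ·) hpow_one_sub).trans (mul_one _))
  ring

end WeakAsymmetry

theorem statement1_general (u v w r t : ℝ) (h₁ : ∀ m : ℕ, -2 * v - t ≠ -m)
    (h₂ : ∀ m : ℕ, w + r ≠ -m) (h₃ : ∀ m : ℕ, u - v - t ≠ -m)
    (h₄ : ∀ m : ℕ, u + v + w + r ≠ -m) :
    Tendsto (fun N : ℕ =>
      Complex.ofReal ((N : ℝ) ^ (u + v)) *
      (qPochInf (qpow N (-2 * v - t)) (qN N) * qPochInf (-(qpow N (w + u))) (qN N) *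
       qPochInf (qpow N (w + r)) (qN N) * qPochInf (-(qpow N (r + u - t))) (qN N)) /
      (qPochInf (-(qpow N (w - v))) (qN N) * qPochInf (qpow N (u - v - t)) (qN N) *
       qPochInf (-(qpow N (r - v - t))) (qN N) * qPochInf (qpow N (u + v + w + r)) (qN N)))
      atTop
      (nhds (Complex.Gamma ((u + v + w + r : ℝ) : ℂ) * Complex.Gamma ((u - v - t : ℝ) : ℂ) /
        (Complex.Gamma ((-2 * v - t : ℝ) : ℂ) * Complex.Gamma ((w + r : ℝ) : ℂ)))) := by
  simp only [qPochInf_qpow, qPochInf_neg_qpow, Complex.Gamma_ofReal, ← Complex.ofReal_mul,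
    ← Complex.ofReal_div]
  exact (Complex.continuous_ofReal.tendsto _).comp (tendsto_realQPochInf_qN u v w r t h₁ h₂ h₃ h₄)

theorem statement1 (u v w r t : ℝ) (huv : 0 < u + v) (hw : 0 < w) (hr : 0 < r)
    (ht1 : -(2 * w) < t) (ht2 : t < 2 * r) (hv : v + t / 2 < 0) :
    Tendsto (fun N : ℕ =>
      Complex.ofReal ((N : ℝ) ^ (u + v)) *
      (qPochInf (qpow N (-2 * v - t)) (qN N) * qPochInf (-(qpow N (w + u))) (qN N) *
       qPochInf (qpow N (w + r)) (qN N) * qPochInf (-(qpow N (r + u - t))) (qN N)) /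
      (qPochInf (-(qpow N (w - v))) (qN N) * qPochInf (qpow N (u - v - t)) (qN N) *
       qPochInf (-(qpow N (r - v - t))) (qN N) * qPochInf (qpow N (u + v + w + r)) (qN N)))
      atTop
      (nhds (Complex.Gamma ((u + v + w + r : ℝ) : ℂ) * Complex.Gamma ((u - v - t : ℝ) : ℂ) /
        (Complex.Gamma ((-2 * v - t : ℝ) : ℂ) * Complex.Gamma ((w + r : ℝ) : ℂ)))) :=
  statement1_general u v w r t (ne_neg_natCast_of_pos (by linarith))
    (ne_neg_natCast_of_pos (by linarith)) (ne_neg_natCast_of_pos (by linarith))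
    (ne_neg_natCast_of_pos (by linarith))
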